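/- Let n be an odd integer with n ≥ 5, T = {an + b(3n−2) + c(3n−1) : a,b,c ∈ ℕ}, F(T) = n(3n−7)/2 + 2, and S = T ∪ {F(T)}. Then the number of distinct L-shapes associated to Ap(S, F(T)) is exactly (n+3)/2. Consequently, for every positive integer N there exists an odd integer n ≥ 5 such that the embedding-dimension-four numerical semigroup S = ⟨n, 3n−2, 3n−1, F(T)⟩ has at least N distinct associated L-shapes; that is, the number of L-shapes of embedding-dimension-four numerical semigroups is not bounded above. -/

import Mathlib

/-- The numerical semigroup `T = ⟨n, 3n-2, 3n-1⟩` as a subset of `ℕ`. -/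
def Tset (n : ℕ) : Set ℕ :=
  {s | ∃ a b c : ℕ, s = a * n + b * (3 * n - 2) + c * (3 * n - 1)}

/-- The Frobenius number of `T`, `F(T) = n(3n-7)/2 + 2` (exact division since `n` is odd). -/
def FT (n : ℕ) : ℕ := n * (3 * n - 7) / 2 + 2

/-- The numerical semigroup `S = T ∪ {F(T)} = ⟨n, 3n-2, 3n-1, F(T)⟩`. -/
def Sset (n : ℕ) : Set ℕ := Tset n ∪ {FT n}

/-- The Apéry set `Ap(S, F(T)) = {s ∈ S | s - F(T) ∉ S}`. -/
def Ap (n : ℕ) : Set ℕ := {s ∈ Sset n | ¬ ∃ t ∈ Sset n, t + FT n = s}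

/-- `phi n (x,y,z) = xn + y(3n-2) + z(3n-1)`. -/
def phi (n : ℕ) (p : ℕ × ℕ × ℕ) : ℕ :=
  p.1 * n + p.2.1 * (3 * n - 2) + p.2.2 * (3 * n - 1)

/-- The set of factorizations of `s` with respect to `(n, 3n-2, 3n-1)`. -/
def Zfac (n s : ℕ) : Set (ℕ × ℕ × ℕ) := {p | phi n p = s}

/-- `p` is the normal form of `s`: a factorization with `z < 2`, `y < (n+1)/2`,
`x < (3n-1)/2`. -/
def IsNF (n s : ℕ) (p : ℕ × ℕ × ℕ) : Prop :=
  p ∈ Zfac n s ∧ p.2.2 < 2 ∧ p.2.1 < (n + 1) / 2 ∧ p.1 < (3 * n - 1) / 2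

/-- `M_i`: elements of the Apéry set having exactly `i` factorizations. -/
def Mset (n i : ℕ) : Set ℕ := {s ∈ Ap n | (Zfac n s).ncard = i}

/-- `nf(M_i)`: normal forms of elements of `M_i`. -/
def nfM (n i : ℕ) : Set (ℕ × ℕ × ℕ) := {p | ∃ s ∈ Mset n i, IsNF n s p}

/-- An L-shape associated with `Ap(S, F(T))`: (C1) `phi` is a bijection from `L` onto the
Apéry set; (C2) `L` is downward closed for the componentwise order. -/
def IsLShape (n : ℕ) (L : Set (ℕ × ℕ × ℕ)) : Prop :=
  Set.BijOn (phi n) L (Ap n) ∧ ∀ u ∈ L, ∀ v : ℕ × ℕ × ℕ, v ≤ u → v ∈ L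

/-- The L-shape `F = F₁ ∪ F₂ ∪ F₃ ∪ F₄` (in `F₃`, `y ≤ (n-7)/2` is stated over the
integers as `2y + 7 ≤ n`, so that `F₃ = ∅` when `n = 5`). -/
def Fset (n : ℕ) : Set (ℕ × ℕ × ℕ) :=
  {p | p.2.2 = 0 ∧ p.1 ≤ (3 * n - 3) / 2 ∧ p.2.1 ≤ (n - 3) / 2} ∪
  {p | p.2.2 = 0 ∧ p.1 ≤ 1 ∧ p.2.1 = (n - 1) / 2} ∪
  {p | p.2.2 = 1 ∧ p.1 ≤ (3 * n - 3) / 2 ∧ 2 * p.2.1 + 7 ≤ n} ∪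
  {p | p.2.2 = 1 ∧ p.1 ≤ (3 * n - 5) / 2 ∧ p.2.1 = (n - 5) / 2}

/-- Points whose value lies in the Apéry set. -/
def PPt (m : ℕ) (p : ℕ × ℕ × ℕ) : Prop :=
  (2 * p.2.1 + p.2.2 + 2 ≤ 2 * m ∧ p.1 + 3 * (p.2.2 / 2) ≤ 3 * m ∧
    ¬ (2 * p.2.1 + p.2.2 + 3 = 2 * m ∧ p.1 + 3 * (p.2.2 / 2) = 3 * m)) ∨
  (2 * p.2.1 + p.2.2 = 2 * m ∧ p.1 + 3 * (p.2.2 / 2) ≤ 1) ∨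
  (p.2.2 = 0 ∧ p.1 ≤ 1 ∧ m + 1 ≤ p.2.1 ∧ p.1 + p.2.1 + 1 ≤ 2 * m)

/-- Equality of values, expressed linearly. -/
def Eqv (m : ℕ) (p q : ℕ × ℕ × ℕ) : Prop :=
  (2 * p.2.1 + p.2.2 = 2 * q.2.1 + q.2.2 ∧
    p.1 + 3 * p.2.1 + 3 * p.2.2 = q.1 + 3 * q.2.1 + 3 * q.2.2) ∨
  (2 * p.2.1 + p.2.2 = 2 * q.2.1 + q.2.2 + (2 * m + 1) ∧
    p.1 + 3 * p.2.1 + 3 * p.2.2 = q.1 + 3 * q.2.1 + 3 * q.2.2 + 1) ∨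
  (2 * q.2.1 + q.2.2 = 2 * p.2.1 + p.2.2 + (2 * m + 1) ∧
    q.1 + 3 * q.2.1 + 3 * q.2.2 = p.1 + 3 * p.2.1 + 3 * p.2.2 + 1)

lemma phi_eq (m : ℕ) (p : ℕ × ℕ × ℕ) :
    (phi (2 * m + 1) p : ℤ) =
      (2 * m + 1) * (p.1 + 3 * p.2.1 + 3 * p.2.2 : ℤ) - (2 * p.2.1 + p.2.2) := by
  unfold phi
  have h1 : 3 * (2 * m + 1) - 2 = 6 * m + 1 := by omega
  have h2 : 3 * (2 * m + 1) - 1 = 6 * m + 2 := by omega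
  rw [h1, h2]; push_cast; ring

lemma FT_eq (m : ℕ) (hm : 2 ≤ m) :
    (FT (2 * m + 1) : ℤ) = (2 * m + 1) * (3 * m - 1) - (2 * m - 1) := by
  obtain ⟨k, rfl⟩ : ∃ k, m = k + 2 := ⟨m - 2, by omega⟩
  unfold FT
  have h1 : 3 * (2 * (k + 2) + 1) - 7 = 2 * (3 * k + 4) := by omega
  have h2 : (2 * (k + 2) + 1) * (2 * (3 * k + 4)) / 2 = (2 * (k + 2) + 1) * (3 * k + 4) := by
    rw [show (2 * (k + 2) + 1) * (2 * (3 * k + 4)) = (2 * (k + 2) + 1) * (3 * k + 4) * 2 by ring]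
    simp
  rw [h1, h2]; push_cast; ring

lemma mem_T (n : ℕ) (s : ℕ) : s ∈ Tset n ↔ ∃ q, phi n q = s := by
  constructor
  · rintro ⟨a, b, c, rfl⟩; exact ⟨(a, b, c), rfl⟩
  · rintro ⟨⟨a, b, c⟩, rfl⟩; exact ⟨a, b, c, rfl⟩

lemma rep (m h w : ℕ) (hw : 3 * ((w + 1) / 2) ≤ h) :
    ∃ q : ℕ × ℕ × ℕ, (phi (2 * m + 1) q : ℤ) = (2 * m + 1) * (h : ℤ) - w := by
  refine ⟨(h - 3 * ((w + 1) / 2), w / 2, w % 2), ?_⟩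
  rw [phi_eq]
  have h1 : ((h - 3 * ((w + 1) / 2) : ℕ) : ℤ) + 3 * (w / 2 : ℕ) + 3 * (w % 2 : ℕ) = h := by omega
  have h2 : 2 * ((w / 2 : ℕ) : ℤ) + (w % 2 : ℕ) = w := by omega
  simp only [h1, h2]

lemma not_PPt_bad (m : ℕ) (hm : 2 ≤ m) (p : ℕ × ℕ × ℕ) (hp : ¬ PPt m p) :
    phi (2 * m + 1) p ∉ Ap (2 * m + 1) := by
  rintro ⟨-, hn⟩
  apply hn
  have hF := FT_eq m hm
  have hP := phi_eq m p
  obtain ⟨x, y, z⟩ := p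
  simp only [PPt] at hp hP

  have twoF : ∀ d : ℤ, (x : ℤ) + 3 * y + 3 * z = 6 * m - 2 + d →
      (2 * y + z : ℤ) = 4 * m - 2 + (2 * m + 1) * d →
      ∃ t ∈ Sset (2 * m + 1), t + FT (2 * m + 1) = phi (2 * m + 1) (x, y, z) := by
    intro d h1 h2
    refine ⟨FT (2 * m + 1), Or.inr rfl, ?_⟩
    zify; rw [hP, hF, h1, h2]; ring
  have gen : ∀ (d : ℤ) (h w : ℕ), (x : ℤ) + 3 * y + 3 * z = h + 3 * m - 1 + d →
      (2 * y + z : ℤ) = w + 2 * m - 1 + (2 * m + 1) * d → 3 * ((w + 1) / 2) ≤ h →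
      ∃ t ∈ Sset (2 * m + 1), t + FT (2 * m + 1) = phi (2 * m + 1) (x, y, z) := by
    intro d h w h1 h2 h3
    obtain ⟨q, hq⟩ := rep m h w h3
    refine ⟨phi (2 * m + 1) q, Or.inl ((mem_T _ _).2 ⟨q, rfl⟩), ?_⟩
    zify; rw [hP, hF, h1, h2, hq]; ring
  by_cases c1 : 2 * y + z + 2 ≤ 2 * m
  · by_cases c2 : 2 * y + z + 3 = 2 * m ∧ x + 3 * (z / 2) = 3 * m
    · exact twoF (-1) (by omega) (by omega)
    · exact gen (-1) (x + 3 * y + 3 * z + 2 - 3 * m) (2 * y + z + 2) (by omega) (by omega) (by omega)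
  · by_cases c3 : 2 ≤ x + 3 * (z / 2) ∨ (2 * y + z) % 2 = 1
    · exact gen 0 (x + 3 * y + 3 * z + 1 - 3 * m) (2 * y + z + 1 - 2 * m) (by omega) (by omega)
        (by omega)
    · by_cases c4 : x = 1 ∧ y + 1 = 2 * m
      · exact twoF 0 (by omega) (by omega)
      · exact gen 1 (x + 3 * y + 3 * z - 3 * m) (2 * y + z - 4 * m) (by omega) (by omega) (by omega)

lemma PPt_good (m : ℕ) (hm : 2 ≤ m) (p : ℕ × ℕ × ℕ) (hp : PPt m p) :
    phi (2 * m + 1) p ∈ Ap (2 * m + 1) := by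
  refine ⟨Or.inl ((mem_T _ _).2 ⟨p, rfl⟩), ?_⟩
  have hF := FT_eq m hm
  have hP := phi_eq m p
  obtain ⟨x, y, z⟩ := p
  simp only [PPt] at hp hP
  rintro ⟨t, ht | ht, he⟩
  · obtain ⟨⟨a, b, c⟩, rfl⟩ := (mem_T _ _).1 ht
    have hQ := phi_eq m (a, b, c)
    zify at he
    rw [hP, hF, hQ] at he
    simp only at he
    obtain ⟨d, hd⟩ : ∃ d : ℤ, d = (x + 3 * y + 3 * z : ℤ) - (a + 3 * b + 3 * c) - 3 * m + 1 :=
      ⟨_, rfl⟩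
    have hw : (2 * m + 1) * d = (2 * y + z : ℤ) - (2 * b + c) - 2 * m + 1 := by
      rw [hd]; linarith
    have d1 : d < 1 := by
      by_contra hc
      have : (2 * m + 1 : ℤ) * 1 ≤ (2 * m + 1) * d := by
        apply mul_le_mul_of_nonneg_left <;> omega
      omega
    have d2 : -2 < d := by
      by_contra hc
      have : (6 * m + 1 : ℤ) * d ≤ (6 * m + 1) * (-2) := by
        apply mul_le_mul_of_nonneg_left <;> omega
      have e1 : (6 * m + 1 : ℤ) * d = 3 * ((2 * m + 1) * d) - 2 * d := by ring
      rw [e1, hw] at this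
      omega
    obtain rfl | rfl : d = 0 ∨ d = -1 := by omega
    · omega
    · omega
  · obtain rfl : t = FT (2 * m + 1) := ht
    zify at he
    rw [hP, hF] at he
    obtain ⟨d, hd⟩ : ∃ d : ℤ, d = (x + 3 * y + 3 * z : ℤ) - 6 * m + 2 := ⟨_, rfl⟩
    have hw : (2 * m + 1) * d = (2 * y + z : ℤ) - 4 * m + 2 := by
      rw [hd]; linarith
    have d1 : d < 1 := by
      by_contra hc
      have : (2 * m + 1 : ℤ) * 1 ≤ (2 * m + 1) * d := by
        apply mul_le_mul_of_nonneg_left <;> omega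
      omega
    have d2 : -2 < d := by
      by_contra hc
      have : (2 * m + 1 : ℤ) * d ≤ (2 * m + 1) * (-2) := by
        apply mul_le_mul_of_nonneg_left <;> omega
      omega
    obtain rfl | rfl : d = 0 ∨ d = -1 := by omega
    · omega
    · omega

lemma phi_mem_Ap (m : ℕ) (hm : 2 ≤ m) (p : ℕ × ℕ × ℕ) :
    phi (2 * m + 1) p ∈ Ap (2 * m + 1) ↔ PPt m p :=
  ⟨fun h => by by_contra hc; exact not_PPt_bad m hm p hc h, PPt_good m hm p⟩

lemma Ap_exists (m : ℕ) (s : ℕ) (hs : s ∈ Ap (2 * m + 1)) :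
    ∃ p, phi (2 * m + 1) p = s := by
  obtain ⟨h | h, hn⟩ := hs
  · exact (mem_T _ _).1 h
  · exfalso
    apply hn
    refine ⟨0, Or.inl ⟨0, 0, 0, by simp⟩, ?_⟩
    simpa using h.symm

lemma Eqv_phi (m : ℕ) (p q : ℕ × ℕ × ℕ) (h : Eqv m p q) :
    phi (2 * m + 1) p = phi (2 * m + 1) q := by
  zify
  rw [phi_eq, phi_eq]
  unfold Eqv at h
  zify at h
  rcases h with ⟨h1, h2⟩ | ⟨h1, h2⟩ | ⟨h1, h2⟩ <;> rw [h1, h2] <;> ring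

lemma phi_Eqv (m : ℕ) (hm : 2 ≤ m) (p q : ℕ × ℕ × ℕ) (hp : PPt m p) (hq : PPt m q)
    (h : phi (2 * m + 1) p = phi (2 * m + 1) q) : Eqv m p q := by
  zify at h
  rw [phi_eq, phi_eq] at h
  obtain ⟨x, y, z⟩ := p
  obtain ⟨a, b, c⟩ := q
  simp only [PPt, Eqv] at *
  obtain ⟨d, hd⟩ : ∃ d : ℤ, d = (x + 3 * y + 3 * z : ℤ) - (a + 3 * b + 3 * c) := ⟨_, rfl⟩
  have hw : (2 * m + 1) * d = (2 * y + z : ℤ) - (2 * b + c) := by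
    rw [hd]; linarith
  have d1 : d < 2 := by
    by_contra hc
    have : (2 * m + 1 : ℤ) * 2 ≤ (2 * m + 1) * d := by
      apply mul_le_mul_of_nonneg_left <;> omega
    omega
  have d2 : -2 < d := by
    by_contra hc
    have : (2 * m + 1 : ℤ) * d ≤ (2 * m + 1) * (-2) := by
      apply mul_le_mul_of_nonneg_left <;> omega
    omega
  obtain rfl | rfl | rfl : d = 0 ∨ d = -1 ∨ d = 1 := by omega
  · left; omega
  · right; right; omega
  · right; left; omega

/-- Combinatorial form of an L-shape. -/
def CL (m : ℕ) (L : Set (ℕ × ℕ × ℕ)) : Prop :=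
  (∀ p ∈ L, PPt m p) ∧ (∀ p ∈ L, ∀ q ∈ L, Eqv m p q → p = q) ∧
  (∀ p, PPt m p → ∃ q ∈ L, Eqv m q p) ∧ ∀ u ∈ L, ∀ v : ℕ × ℕ × ℕ, v ≤ u → v ∈ L

lemma CL_iff (m : ℕ) (hm : 2 ≤ m) (L : Set (ℕ × ℕ × ℕ)) :
    IsLShape (2 * m + 1) L ↔ CL m L := by
  constructor
  · rintro ⟨⟨h1, h2, h3⟩, h4⟩
    have hP : ∀ p ∈ L, PPt m p := fun p hp => (phi_mem_Ap m hm p).1 (h1 hp)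
    refine ⟨hP, fun p hp q hq h => h2 hp hq (Eqv_phi m p q h), fun p hp => ?_, h4⟩
    obtain ⟨q, hq, e⟩ := h3 ((phi_mem_Ap m hm p).2 hp)
    exact ⟨q, hq, phi_Eqv m hm q p (hP q hq) hp e⟩
  · rintro ⟨h1, h2, h3, h4⟩
    refine ⟨⟨fun p hp => (phi_mem_Ap m hm p).2 (h1 p hp), fun p hp q hq h =>
      h2 p hp q hq (phi_Eqv m hm p q (h1 p hp) (h1 q hq) h), fun s hs => ?_⟩, h4⟩
    obtain ⟨p, rfl⟩ := Ap_exists m s hs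
    obtain ⟨q, hq, e⟩ := h3 p ((phi_mem_Ap m hm p).1 hs)
    exact ⟨q, hq, Eqv_phi m q p e⟩

/-- The explicit L-shapes. -/
def Sh (m : ℕ) (b : Prop) (J : ℕ) : Set (ℕ × ℕ × ℕ) :=
  {p | PPt m p ∧
    ((p.2.1 ≤ m ∧ (b → p.2.2 ≤ 1) ∧ (¬ b → p.1 ≤ 2 ∨ p.2.1 = 0) ∧
      ¬ ((2 * p.2.1 + p.2.2) % 2 = 1 ∧ 3 * m ≤ p.1 + 3 * (p.2.2 / 2) + 1 ∧
          2 * p.2.1 + p.2.2 < 2 * J + 1)) ∨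
     (m + 1 ≤ p.2.1 ∧ p.2.1 < m + 1 + J))}

lemma PPt_mk (m x y z : ℕ) : PPt m (x, y, z) ↔
  ((2 * y + z + 2 ≤ 2 * m ∧ x + 3 * (z / 2) ≤ 3 * m ∧
    ¬ (2 * y + z + 3 = 2 * m ∧ x + 3 * (z / 2) = 3 * m)) ∨
  (2 * y + z = 2 * m ∧ x + 3 * (z / 2) ≤ 1) ∨
  (z = 0 ∧ x ≤ 1 ∧ m + 1 ≤ y ∧ x + y + 1 ≤ 2 * m)) := Iff.rfl

lemma Eqv_mk (m x y z u v w : ℕ) : Eqv m (x, y, z) (u, v, w) ↔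
  ((2 * y + z = 2 * v + w ∧ x + 3 * y + 3 * z = u + 3 * v + 3 * w) ∨
  (2 * y + z = 2 * v + w + (2 * m + 1) ∧ x + 3 * y + 3 * z = u + 3 * v + 3 * w + 1) ∨
  (2 * v + w = 2 * y + z + (2 * m + 1) ∧ u + 3 * v + 3 * w = x + 3 * y + 3 * z + 1)) := Iff.rfl

lemma mem_Sh (m : ℕ) (b : Prop) (J x y z : ℕ) : (x, y, z) ∈ Sh m b J ↔
  PPt m (x, y, z) ∧
    ((y ≤ m ∧ (b → z ≤ 1) ∧ (¬ b → x ≤ 2 ∨ y = 0) ∧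
      ¬ ((2 * y + z) % 2 = 1 ∧ 3 * m ≤ x + 3 * (z / 2) + 1 ∧ 2 * y + z < 2 * J + 1)) ∨
     (m + 1 ≤ y ∧ y < m + 1 + J)) := Iff.rfl

lemma PPt_mono (m x y z u v w : ℕ) (h : PPt m (x, y, z)) (h1 : u ≤ x) (h2 : v ≤ y)
    (h3 : w ≤ z) : PPt m (u, v, w) := by
  rw [PPt_mk] at *
  rcases h with h | h | h
  · left; omega
  · omega
  · omega

lemma PPt_low (m x y z : ℕ) (h : PPt m (x, y, z)) (hy : y ≤ m) : 2 * y + z ≤ 2 * m := by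
  rw [PPt_mk] at h; omega

lemma PPt_high (m x y z : ℕ) (h : PPt m (x, y, z)) (hy : m + 1 ≤ y) :
    z = 0 ∧ x ≤ 1 ∧ x + y + 1 ≤ 2 * m := by
  rw [PPt_mk] at h; omega

lemma Sh_inj (m : ℕ) (b : Prop) (J : ℕ) (p q : ℕ × ℕ × ℕ) (hp : p ∈ Sh m b J)
    (hq : q ∈ Sh m b J) (h : Eqv m p q) : p = q := by
  obtain ⟨x, y, z⟩ := p
  obtain ⟨u, v, w⟩ := q
  rw [mem_Sh] at hp hq
  rw [Eqv_mk] at h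
  obtain ⟨hp, ⟨p1, p2, p3, p4⟩ | ⟨p1, p2⟩⟩ := hp <;>
  obtain ⟨hq, ⟨q1, q2, q3, q4⟩ | ⟨q1, q2⟩⟩ := hq
  · have a1 := PPt_low _ _ _ _ hp p1
    have a2 := PPt_low _ _ _ _ hq q1
    have h' : 2 * y + z = 2 * v + w ∧ x + 3 * y + 3 * z = u + 3 * v + 3 * w := by omega
    clear h hp hq p4 q4
    simp only [Prod.mk.injEq]
    by_cases hb : b
    · have := p2 hb
      have := q2 hb
      omega
    · have := p3 hb
      have := q3 hb
      omega
  · have a1 := PPt_low _ _ _ _ hp p1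
    have a2 := PPt_high _ _ _ _ hq q1
    exfalso; clear hp hq p2 p3
    omega
  · have a1 := PPt_high _ _ _ _ hp p1
    have a2 := PPt_low _ _ _ _ hq q1
    exfalso; clear hp hq q2 q3
    omega
  · have a1 := PPt_high _ _ _ _ hp p1
    have a2 := PPt_high _ _ _ _ hq q1
    simp only [Prod.mk.injEq]
    clear hp hq
    omega

lemma Sh_CL (m : ℕ) (hm : 2 ≤ m) (b : Prop) (J : ℕ) (hJ : J + 1 ≤ m)
    (hb : b → J = 0 ∨ J + 1 = m) : CL m (Sh m b J) := by
  refine ⟨fun p hp => hp.1, fun p hp q hq => Sh_inj m b J p q hp hq, ?_, ?_⟩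
  · have key : ∀ r e : ℕ, ((r + 2 ≤ 2 * m ∧ e ≤ 3 * m ∧ ¬ (r + 3 = 2 * m ∧ e = 3 * m)) ∨
        (r = 2 * m ∧ e ≤ 1)) → ∃ q ∈ Sh m b J, Eqv m q (e, r / 2, r % 2) := by
      intro r e hre
      by_cases c : r % 2 = 1 ∧ 3 * m ≤ e + 1 ∧ r < 2 * J + 1
      · refine ⟨(e + 1 - 3 * m, m + 1 + r / 2, 0), ?_, ?_⟩
        · rw [mem_Sh, PPt_mk]
          constructor
          · omega
          · right; omega
        · rw [Eqv_mk]; omega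
      · by_cases hb' : b
        · refine ⟨(e, r / 2, r % 2), ?_, ?_⟩
          · rw [mem_Sh, PPt_mk]
            constructor
            · omega
            · left
              refine ⟨by omega, fun _ => by omega, fun h => absurd hb' h, by omega⟩
          · rw [Eqv_mk]; omega
        · obtain ⟨k, hk⟩ : ∃ k, k ≤ r / 2 ∧ 3 * k ≤ e ∧ (k = r / 2 ∨ e ≤ 3 * k + 2) := by
            by_cases h : r / 2 ≤ e / 3
            · exact ⟨r / 2, by omega⟩
            · exact ⟨e / 3, by omega⟩
          refine ⟨(e - 3 * k, r / 2 - k, r % 2 + 2 * k), ?_, ?_⟩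
          · rw [mem_Sh, PPt_mk]
            constructor
            · omega
            · left
              refine ⟨by omega, fun h => absurd h hb', fun _ => by omega, by omega⟩
          · rw [Eqv_mk]; omega
    rintro ⟨x, y, z⟩ hp
    rw [PPt_mk] at hp
    by_cases c : 2 * y + z ≤ 2 * m
    · obtain ⟨⟨a, b, c⟩, hq, h⟩ := key (2 * y + z) (x + 3 * (z / 2)) (by omega)
      refine ⟨_, hq, ?_⟩
      clear hq key
      rw [Eqv_mk] at *
      have e1 : 2 * ((2 * y + z) / 2) + (2 * y + z) % 2 = 2 * y + z := by omega
      have e2 : x + 3 * (z / 2) + 3 * ((2 * y + z) / 2) + 3 * ((2 * y + z) % 2)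
        = x + 3 * y + 3 * z := by omega
      rw [e1, e2] at h
      exact h
    · have hp' : z = 0 ∧ x ≤ 1 ∧ m + 1 ≤ y ∧ x + y + 1 ≤ 2 * m := by omega
      clear hp
      obtain ⟨⟨a, b, c⟩, hq, h⟩ := key (2 * y - 2 * m - 1) (x + 3 * m - 1) (by omega)
      refine ⟨_, hq, ?_⟩
      have hq1 := hq.1
      clear hq key
      have e1 : (2 * y - 2 * m - 1) / 2 = y - m - 1 := by omega
      have e2 : (2 * y - 2 * m - 1) % 2 = 1 := by omega
      rw [Eqv_mk, e1, e2] at h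
      rw [Eqv_mk]
      by_cases hb : b ≤ m
      · have := PPt_low _ _ _ _ hq1 hb
        clear hq1
        omega
      · have := PPt_high _ _ _ _ hq1 (by omega)
        clear hq1
        omega
  · rintro ⟨x, y, z⟩ hp ⟨u, v, w⟩ hle
    simp only [Prod.mk_le_mk] at hle
    obtain ⟨l1, l2, l3⟩ := hle
    rw [mem_Sh] at *
    obtain ⟨hP, hp⟩ := hp
    refine ⟨PPt_mono _ _ _ _ _ _ _ hP l1 l2 l3, ?_⟩
    rcases hp with ⟨p1, p2, p3, p4⟩ | ⟨p1, p2⟩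
    · left
      refine ⟨by omega, fun h => ?_, fun h => ?_, ?_⟩
      · have := p2 h; omega
      · have := p3 h; omega
      · rintro ⟨c1, c2, c3⟩
        have a1 := PPt_low _ _ _ _ hP p1
        have a2 : x + 3 * (z / 2) ≤ 3 * m := by rw [PPt_mk] at hP; omega
        have a3 : 2 * y + z + 2 ≤ 2 * m := by rw [PPt_mk] at hP; omega
        clear hP
        apply p4
        by_cases hb' : b
        · have := hb hb'
          have := p2 hb'
          omega
        · have := p3 hb'
          clear p4
          omega
    · have := PPt_high _ _ _ _ hP p1
      clear hP
      by_cases hv : v ≤ m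
      · left
        refine ⟨hv, fun _ => by omega, fun _ => by omega, by omega⟩
      · right; omega

lemma CL_Sh (m : ℕ) (hm : 2 ≤ m) (L : Set (ℕ × ℕ × ℕ)) (hL : CL m L) :
    ∃ (b : Prop) (J : ℕ), J + 1 ≤ m ∧ (b → J = 0 ∨ J + 1 = m) ∧ L = Sh m b J := by
  classical
  obtain ⟨h1, h2, h3, h4⟩ := hL
  have hdown : ∀ {x y z : ℕ}, (x, y, z) ∈ L → ∀ u v w, u ≤ x → v ≤ y → w ≤ z → (u, v, w) ∈ L :=
    fun h u v w a b c => h4 _ h _ (by simp only [Prod.mk_le_mk]; exact ⟨a, b, c⟩)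
  have hex : ∃ j, (0, m + 1 + j, 0) ∉ L := by
    refine ⟨m, fun h => ?_⟩
    have := h1 _ h
    simp only [PPt] at this
    omega
  have hlast : (0, m + 1 + (m - 1), 0) ∉ L := fun h => by
    have := h1 _ h
    simp only [PPt] at this
    omega
  have hJ1 := Nat.find_spec hex
  have hJ2 : ∀ j < Nat.find hex, (0, m + 1 + j, 0) ∈ L := fun j hj => by
    have := Nat.find_min hex hj
    simpa using this
  have hJ3 : Nat.find hex ≤ m - 1 := Nat.find_min' hex hlast
  generalize Nat.find hex = J at hJ1 hJ2 hJ3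
  have hz : (3, 1, 0) ∈ L → ∀ x y z, (x, y, z) ∈ L → z ≤ 1 := by
    intro hA x y z h
    by_contra hc
    have := h2 _ hA _ (hdown h 0 0 2 (by omega) (by omega) (by omega)) (by simp [Eqv])
    simp at this
  have hsub : L ⊆ Sh m ((3, 1, 0) ∈ L) J := by
    rintro ⟨x, y, z⟩ hp
    have hP := h1 _ hp
    refine ⟨hP, ?_⟩
    by_cases hy : y ≤ m
    · left
      refine ⟨hy, fun hA => hz hA x y z hp, fun hA => ?_, ?_⟩
      · by_contra hc
        simp only at hc
        exact hA (hdown hp 3 1 0 (by omega) (by omega) (by omega))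
      · rintro ⟨c1, c2, c3⟩
        simp only [PPt] at *
        have hII := hJ2 ((2 * y + z) / 2) (by omega)
        by_cases ce : x + 3 * (z / 2) + 1 = 3 * m
        · have := h2 _ hp _ hII (by rw [Eqv_mk]; omega)
          simp only [Prod.mk.injEq] at this
          omega
        · have hp' := hdown hp (x - 1) y z (by omega) le_rfl le_rfl
          have := h2 _ hp' _ hII (by rw [Eqv_mk]; omega)
          simp only [Prod.mk.injEq] at this
          omega
    · right
      refine ⟨by simp only; omega, ?_⟩
      by_contra hc
      simp only at hc
      exact hJ1 (hdown hp 0 (m + 1 + J) 0 (by omega) (by omega) (by omega))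
  refine ⟨(3, 1, 0) ∈ L, J, by omega, fun hA => ?_, ?_⟩
  · by_contra hc
    have h0 := hJ2 0 (by omega)
    obtain ⟨⟨x, y, z⟩, hq, he⟩ := h3 (0, m + 1 + J, 0) (by rw [PPt_mk]; omega)
    have hP := h1 _ hq
    have hz' := hz hA x y z hq
    simp only [Eqv, PPt] at he hP
    by_cases hy : y ≤ m
    · have hp' := hdown hq (3 * m - 1) 0 1 (by omega) (by omega) (by omega)
      have := h2 _ hp' _ h0 (by rw [Eqv_mk]; omega)
      simp only [Prod.mk.injEq] at this
      omega
    · apply hJ1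
      exact hdown hq 0 (m + 1 + J) 0 (by omega) (by omega) (by omega)
  · apply Set.Subset.antisymm hsub
    intro p hp
    obtain ⟨q, hq, he⟩ := h3 p hp.1
    rw [← Sh_inj m _ J q p (hsub hq) hp he]
    exact hq

lemma Sh_b (m : ℕ) (hm : 2 ≤ m) (b : Prop) (J : ℕ) : (3, 1, 0) ∈ Sh m b J ↔ b := by
  rw [mem_Sh, PPt_mk]
  by_cases hb : b
  · simp only [hb, not_true_eq_false, forall_true_left, false_imp_iff, true_and, iff_true]
    omega
  · simp only [hb, not_false_eq_true, forall_true_left, false_imp_iff, true_and, iff_false]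
    omega

lemma Sh_J (m : ℕ) (b : Prop) (J j : ℕ) (hj : j + 2 ≤ m) :
    (0, m + 1 + j, 0) ∈ Sh m b J ↔ j < J := by
  rw [mem_Sh, PPt_mk]
  constructor
  · rintro ⟨_, h | h⟩
    · omega
    · omega
  · intro h
    constructor
    · omega
    · right; omega

lemma Sh_J_inj (m : ℕ) (b c : Prop) (J K : ℕ) (hJ : J + 1 ≤ m) (hK : K + 1 ≤ m)
    (h : Sh m b J = Sh m c K) : J = K := by
  by_contra hc
  rcases Nat.lt_or_gt_of_ne hc with hlt | hlt
  · have h1 := Sh_J m b J J (by omega)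
    have h2 := Sh_J m c K J (by omega)
    rw [h, h2] at h1
    omega
  · have h1 := Sh_J m b J K (by omega)
    have h2 := Sh_J m c K K (by omega)
    rw [h, h2] at h1
    omega

/-- Enumeration of the L-shapes. -/
def En (m i : ℕ) : Set (ℕ × ℕ × ℕ) :=
  Sh m (m ≤ i) (if i < m then i else if i = m then 0 else m - 1)

lemma count (m : ℕ) (hm : 2 ≤ m) :
    {L : Set (ℕ × ℕ × ℕ) | IsLShape (2 * m + 1) L}.ncard = m + 2 := by
  have hset : {L : Set (ℕ × ℕ × ℕ) | IsLShape (2 * m + 1) L} =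
      Set.image (En m) (Finset.range (m + 2) : Set ℕ) := by
    ext L
    simp only [Set.mem_ofPred_eq, CL_iff m hm, Set.mem_image, Finset.coe_range, Set.mem_Iio]
    constructor
    · intro h
      obtain ⟨b, J, hJ, hb, rfl⟩ := CL_Sh m hm L h
      by_cases hb' : b
      · rcases hb hb' with h0 | h0
        · refine ⟨m, by omega, ?_⟩
          have e : (m ≤ m) = b := by simp [hb']
          simp only [En, e]
          simp [h0]
        · refine ⟨m + 1, by omega, ?_⟩
          have e : (m ≤ m + 1) = b := by simp [hb']
          have e2 : m - 1 = J := by omega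
          simp only [En, e]
          simp [e2]
      · refine ⟨J, by omega, ?_⟩
        have e : (m ≤ J) = b := by simp only [hb', eq_iff_iff, iff_false]; omega
        simp only [En, e]
        rw [if_pos (by omega)]
    · rintro ⟨i, hi, rfl⟩
      apply Sh_CL m hm
      · split_ifs <;> omega
      · intro h
        split_ifs <;> omega
  rw [hset, Set.InjOn.ncard_image, Set.ncard_coe_finset, Finset.card_range]
  intro i hi j hj h
  simp only [Finset.coe_range, Set.mem_Iio] at hi hj
  simp only [En] at h
  have hb : m ≤ i ↔ m ≤ j := by
    rw [← Sh_b m hm (m ≤ i), h, Sh_b m hm]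
  have hJ := Sh_J_inj m _ _ _ _ (by split_ifs <;> omega) (by split_ifs <;> omega) h
  split_ifs at hJ <;> omega

/-- For every odd `n ≥ 5`, the number of L-shapes associated to `Ap(S, F(T))` is
exactly `(n+3)/2`; consequently the number of L-shapes of embedding-dimension-four
numerical semigroups is not bounded above. -/
theorem stmt19 :
    (∀ n : ℕ, Odd n → 5 ≤ n →
      {L : Set (ℕ × ℕ × ℕ) | IsLShape n L}.ncard = (n + 3) / 2) ∧
    ∀ N : ℕ, ∃ n : ℕ, Odd n ∧ 5 ≤ n ∧
      N ≤ {L : Set (ℕ × ℕ × ℕ) | IsLShape n L}.ncard := by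
  have main : ∀ n : ℕ, Odd n → 5 ≤ n →
      {L : Set (ℕ × ℕ × ℕ) | IsLShape n L}.ncard = (n + 3) / 2 := by
    rintro n ⟨m, rfl⟩ h5
    rw [count m (by omega)]
    omega
  refine ⟨main, fun N => ⟨2 * (N + 2) + 1, ⟨N + 2, rfl⟩, by omega, ?_⟩⟩
  rw [main _ ⟨N + 2, rfl⟩ (by omega)]
  omega
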